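/- arXiv:2504.08084 — 3 statements merged into one kernel-verified Lean document; each statement's English description precedes it below -/
import Mathlib

section
/- Let G = *_C G_i (i ∈ I) be an amalgamated free product, let P_i be a normal subsemigroup of G_i for each i ∈ I such that P_i ∩ C = P_j ∩ C for all i, j ∈ I. Then for each i ∈ I, the intersection of G_i with the normal subsemigroup of G generated by the union of all P_j equals P_i. -/
/-- A normal subsemigroup of a group: closed under products and under conjugation by
all elements of the group. -/
def IsNormalSubsemigroup {G : Type*} [Group G] (P : Set G) : Prop :=
  (∀ x ∈ P, ∀ y ∈ P, x * y ∈ P) ∧ ∀ x ∈ P, ∀ g : G, g⁻¹ * x * g ∈ P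

/-- `nss G S`: the normal subsemigroup of `G` generated by `S`, i.e. all nonempty
finite products of conjugates of elements of `S`. -/
def nss (G : Type*) [Group G] (S : Set G) : Set G :=
  {x | ∃ l : List (G × G), l ≠ [] ∧ (∀ p ∈ l, p.1 ∈ S) ∧
    (l.map fun p => p.2⁻¹ * p.1 * p.2).prod = x}

/-!
Preorder each `G i` by `a ≤ b ↔ a⁻¹ * b ∈ Q i`, where `Q i` is `P i` together with `1`. Consider the
inequalities `a ≤ g₁ ⋯ gₙ` between an element of one factor and a word in all factors which can be
derived by comparing inside factors, multiplying inequalities, and moving the left-hand side from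
one factor to another through `C`. Derivability turns out to depend on the word only through its
value in the amalgam; the one hard case is that multiplying two adjacent letters of the same factor
preserves it. Products of conjugates of elements of the `Q j` are values of words above `1`, so if
`x` in `G i` is such a product, then `x⁻¹` is derivably below a word with value `x⁻¹ * x = 1`, hence
below the empty word, and this forces `x ∈ Q i`. When `x = 1`, the inverse of some `p ∈ P j` is a
product of conjugates as well, so `p⁻¹ ∈ Q j` and `1 ∈ P j`.
-/

section Nss

variable {K : Type*} [Group K] {S : Set K}

/-- The normal submonoid of a group generated by a set `S`, which is `nss K S ∪ {1}`. -/
def normalMonoidClosure (S : Set K) : Submonoid K :=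
  Submonoid.closure (Group.conjugatesOfSet S)

theorem normalMonoidClosure_mono {T : Set K} (h : S ⊆ T) :
    normalMonoidClosure S ≤ normalMonoidClosure T :=
  Submonoid.closure_mono (Group.conjugatesOfSet_mono h)

theorem subset_nss : S ⊆ nss K S :=
  fun s hs => ⟨[(s, 1)], by simp, by simpa using hs, by simp⟩

theorem prod_map_conj_mem_normalMonoidClosure {l : List (K × K)} (hl : ∀ p ∈ l, p.1 ∈ S) :
    (l.map fun p => p.2⁻¹ * p.1 * p.2).prod ∈ normalMonoidClosure S := by
  refine Submonoid.list_prod_mem _ fun y hy => Submonoid.subset_closure ?_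
  obtain ⟨⟨s, g⟩, hp, rfl⟩ := List.mem_map.1 hy
  exact Group.mem_conjugatesOfSet_iff.2 ⟨s, hl _ hp, isConj_iff.2 ⟨g⁻¹, by simp⟩⟩

theorem nss_subset_normalMonoidClosure : nss K S ⊆ normalMonoidClosure S := by
  rintro _ ⟨l, -, hl, rfl⟩
  exact prod_map_conj_mem_normalMonoidClosure hl

theorem conj_mem_normalMonoidClosure {x : K} (hx : x ∈ normalMonoidClosure S) (g : K) :
    g * x * g⁻¹ ∈ normalMonoidClosure S := by
  suffices h : normalMonoidClosure S ≤
      (normalMonoidClosure S).comap (MulAut.conj g).toMonoidHom from h hx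
  exact Submonoid.closure_le.2 fun y hy =>
    Submonoid.subset_closure (Group.conj_mem_conjugatesOfSet hy)

theorem exists_inv_mem_normalMonoidClosure_of_one_mem_nss (h : (1 : K) ∈ nss K S) :
    ∃ s ∈ S, s⁻¹ ∈ normalMonoidClosure S := by
  obtain ⟨_ | ⟨⟨s, g⟩, l⟩, hne, hl, hprod⟩ := h
  · exact absurd rfl hne
  refine ⟨s, hl (s, g) List.mem_cons_self, ?_⟩
  have hrest := prod_map_conj_mem_normalMonoidClosure fun p hp => hl p (List.mem_cons_of_mem _ hp)
  rw [List.map_cons, List.prod_cons] at hprod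
  rw [eq_inv_of_mul_eq_one_right hprod] at hrest
  simpa [mul_assoc] using conj_mem_normalMonoidClosure hrest g

end Nss

namespace IsNormalSubsemigroup

variable {K : Type*} [Group K] {P : Set K}

/-- The normal submonoid `P ∪ {1}` obtained by adjoining the identity to a normal subsemigroup. -/
def withOne (hP : IsNormalSubsemigroup P) : Submonoid K where
  carrier := {a | a = 1 ∨ a ∈ P}
  one_mem' := .inl rfl
  mul_mem' := by
    rintro a b (rfl | ha) (rfl | hb)
    · exact .inl (one_mul 1)
    · exact .inr (by simpa using hb)
    · exact .inr (by simpa using ha)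
    · exact .inr (hP.1 a ha b hb)

theorem conj_mem_withOne (hP : IsNormalSubsemigroup P) {a : K} (ha : a ∈ hP.withOne) (g : K) :
    g⁻¹ * a * g ∈ hP.withOne := by
  rcases ha with rfl | ha
  · exact .inl (by simp)
  · exact .inr (hP.2 a ha g)

theorem one_mem_of_inv_mem_withOne (hP : IsNormalSubsemigroup P) {a : K} (ha : a ∈ P)
    (ha' : a⁻¹ ∈ hP.withOne) : 1 ∈ P := by
  rcases ha' with h | h
  · rwa [inv_eq_one.1 h] at ha
  · simpa using hP.1 a ha _ h

theorem map_mem_withOne {H L : Type*} [Group H] [Group L] {f : H →* K}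
    (hf : Function.Injective f) (g : H →* L) {R : Set L} (hP : IsNormalSubsemigroup P)
    (hR : IsNormalSubsemigroup R) {h : H} (hPR : f h ∈ P → g h ∈ R)
    (hh : f h ∈ hP.withOne) : g h ∈ hR.withOne := by
  rcases hh with hh | hh
  · exact .inl (by rw [(map_eq_one_iff f hf).1 hh, map_one])
  · exact .inr (hPR hh)

end IsNormalSubsemigroup

section Amalgam

variable {ι : Type*} {G : ι → Type*} [∀ i, Group (G i)] {H : Type*} [Group H]

/-- `Identified φ a b` says that the defining relations of the amalgam identify the elements `a`
and `b` of two factors, which may be the same factor: either `a` and `b` are the same element, or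
they are the images of one element of the amalgamated group `H`. -/
inductive Identified (φ : ∀ i, H →* G i) : ∀ {i j : ι}, G i → G j → Prop
  | refl {i : ι} (a : G i) : Identified φ a a
  | map {i j : ι} (h : H) : Identified φ (φ i h) (φ j h)

theorem Identified.mul {φ : ∀ i, H →* G i} {i j : ι} {a a' : G i} {b b' : G j}
    (h : Identified φ a b) (h' : Identified φ a' b') : Identified φ (a * a') (b * b') := by
  cases h with
  | refl => cases h' <;> exact .refl _
  | map c =>
    cases h' with
    | refl => exact .refl _
    | map d => simpa only [map_mul] using Identified.map (φ := φ) (i := i) (j := j) (c * d)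

/-- `LEProd φ Q a l` says that `a ≤ ∏ l` is derivable, where `a` lies in one factor, `l` is a word
in the letters of all factors, and each factor `G i` is preordered by `x ≤ y ↔ x⁻¹ * y ∈ Q i`. -/
inductive LEProd (φ : ∀ i, H →* G i) (Q : ∀ i, Submonoid (G i)) :
    ∀ {i : ι}, G i → List (Σ i, G i) → Prop
  | nil {i : ι} {a : G i} (ha : a⁻¹ ∈ Q i) : LEProd φ Q a []
  | letter {i : ι} (a : G i) : LEProd φ Q a [⟨i, a⟩]
  | mul {i : ι} {a b : G i} {l m : List (Σ i, G i)} (hl : LEProd φ Q a l) (hm : LEProd φ Q b m) :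
      LEProd φ Q (a * b) (l ++ m)
  | transfer {i j : ι} {a : G i} {b : G j} {l : List (Σ i, G i)} (hab : Identified φ a b)
      (hl : LEProd φ Q a l) : LEProd φ Q b l

namespace LEProd

variable {φ : ∀ i, H →* G i} {Q : ∀ i, Submonoid (G i)} {i k : ι} {l m u v : List (Σ i, G i)}

theorem one_nil : LEProd φ Q (1 : G i) [] := nil (by simp)

theorem one_letter {p : G i} (hp : p ∈ Q i) : LEProd φ Q (1 : G i) [⟨i, p⟩] := by
  simpa using (nil (φ := φ) (a := p⁻¹) (by simpa using hp)).mul (letter p)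

theorem transfer_map {c : H} (h : LEProd φ Q (φ i c) l) : LEProd φ Q (φ k c) l :=
  transfer (.map c) h

theorem transfer_one (h : LEProd φ Q (1 : G i) l) : LEProd φ Q (1 : G k) l := by
  have h_map : LEProd φ Q (φ i 1) l := by simpa using h
  simpa using h_map.transfer_map (k := k)

theorem replace_letter {s : Σ i, G i} (hs : LEProd φ Q s.2 m) {x : G k}
    (h : LEProd φ Q x (u ++ s :: v)) : LEProd φ Q x (u ++ (m ++ v)) := by
  generalize hw : u ++ s :: v = w at h
  induction h generalizing u v with
  | nil => simp at hw
  | letter a =>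
    obtain ⟨rfl, rfl, rfl⟩ : u = [] ∧ s = ⟨_, a⟩ ∧ v = [] := by
      simpa [List.append_eq_singleton_iff] using hw
    simpa using hs
  | mul hl hm ihl ihm =>
    rcases List.append_eq_append_iff.1 hw with ⟨_ | ⟨t, w⟩, rfl, hv⟩ | ⟨w, rfl, rfl⟩
    · simpa using hl.mul (ihm (u := []) hv)
    · obtain ⟨rfl, rfl⟩ := List.cons.inj hv
      simpa using (ihl rfl).mul hm
    · simpa using hl.mul (ihm rfl)
  | transfer hab _ ih => exact .transfer hab (ih hw)

theorem insert (hm : LEProd φ Q (1 : G i) m) {x : G k} (h : LEProd φ Q x (u ++ v)) :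
    LEProd φ Q x (u ++ (m ++ v)) := by
  rcases v with _ | ⟨s, v⟩
  · simpa using h.mul hm.transfer_one
  · have hs : LEProd φ Q s.2 (m ++ [s]) := by simpa using hm.transfer_one.mul (letter s.2)
    simpa using replace_letter hs h

section Inversion

variable (hconj : ∀ i, ∀ x ∈ Q i, ∀ g : G i, g⁻¹ * x * g ∈ Q i)
  (hφ : ∀ i j h, φ i h ∈ Q i → φ j h ∈ Q j)

include hφ

theorem inv_mem_of_nil {a : G i} (h : LEProd φ Q a []) : a⁻¹ ∈ Q i := by
  generalize hw : [] = w at h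
  induction h with
  | nil ha => exact ha
  | letter => simp at hw
  | mul _ _ ihl ihm =>
    obtain ⟨rfl, rfl⟩ := List.append_eq_nil_iff.1 hw.symm
    simpa using mul_mem (ihm rfl) (ihl rfl)
  | transfer hab _ ih =>
    cases hab with
    | refl => exact ih hw
    | map c => simpa using hφ _ _ c⁻¹ (by simpa using ih hw)

include hconj

/-- In a derivation of `y ≤ b * ∏ v`, the letter `b` is consumed in its own factor, in some
`t ≤ b * ∏ v₁`, whose left-hand side is then transferred to the factor of `y`. -/
theorem exists_of_cons {y : G k} {b : G i} (h : LEProd φ Q y (⟨i, b⟩ :: v)) :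
    ∃ v₁ v₂, v = v₁ ++ v₂ ∧ ∃ (t : G i) (r : G k), Identified φ t r ∧
      LEProd φ Q (b⁻¹ * t) v₁ ∧ LEProd φ Q (r⁻¹ * y) v₂ := by
  generalize hw : ⟨i, b⟩ :: v = w at h
  induction h generalizing v with
  | nil => simp at hw
  | letter a =>
    cases hw
    exact ⟨[], [], rfl, b, b, .refl b, by simpa using one_nil, by simpa using one_nil⟩
  | @mul k a y l m hl hm ihl ihm =>
    rcases l with _ | ⟨s, l⟩
    · obtain ⟨v₁, v₂, rfl, t, r, htr, hv₁, hv₂⟩ := ihm hw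
      have ha : LEProd φ Q (r⁻¹ * a * r) [] :=
        nil (by simpa [mul_assoc] using hconj k _ (inv_mem_of_nil hφ hl) r)
      exact ⟨v₁, v₂, rfl, t, r, htr, hv₁, by simpa [mul_assoc] using ha.mul hv₂⟩
    · obtain ⟨rfl, rfl⟩ := List.cons.inj hw
      obtain ⟨v₁, v₂, rfl, t, r, htr, hv₁, hv₂⟩ := ihl rfl
      exact ⟨v₁, v₂ ++ m, by simp, t, r, htr, hv₁, by simpa [mul_assoc] using hv₂.mul hm⟩
  | @transfer j k _ _ _ hab _ ih =>
    obtain ⟨v₁, v₂, rfl, t, r, htr, hv₁, hv₂⟩ := ih hw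
    cases hab with
    | refl => exact ⟨v₁, v₂, rfl, t, r, htr, hv₁, hv₂⟩
    | map c =>
      cases htr with
      | refl =>
        exact ⟨v₁ ++ v₂, [], by simp, φ _ c, _, .map c,
          by simpa [mul_assoc] using hv₁.mul hv₂, by simpa using one_nil⟩
      | map d =>
        have h_map : LEProd φ Q (φ j (d⁻¹ * c)) v₂ := by simpa using hv₂
        exact ⟨v₁, v₂, rfl, φ i d, φ k d, .map d, hv₁, by simpa using h_map.transfer_map (k := k)⟩

theorem exists_of_concat {y : G k} {a : G i} (h : LEProd φ Q y (u ++ [⟨i, a⟩])) :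
    ∃ u₁ u₂, u = u₁ ++ u₂ ∧ ∃ (t : G i) (r : G k), Identified φ t r ∧
      LEProd φ Q (y * r⁻¹) u₁ ∧ LEProd φ Q (t * a⁻¹) u₂ := by
  generalize hw : u ++ [⟨i, a⟩] = w at h
  induction h generalizing u with
  | nil => simp at hw
  | letter b =>
    obtain ⟨rfl, hs⟩ : u = [] ∧ (⟨i, a⟩ : Σ i, G i) = ⟨_, b⟩ := by
      simpa [List.append_eq_singleton_iff] using hw
    cases hs
    exact ⟨[], [], rfl, a, a, .refl a, by simpa using one_nil, by simpa using one_nil⟩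
  | @mul k y b l m hl hm ihl ihm =>
    rcases List.eq_nil_or_concat' m with rfl | ⟨m, s, rfl⟩
    · obtain ⟨u₁, u₂, rfl, t, r, htr, hu₁, hu₂⟩ := ihl (by simpa using hw)
      have hb : LEProd φ Q (r * b * r⁻¹) [] :=
        nil (by simpa [mul_assoc] using hconj k _ (inv_mem_of_nil hφ hm) r⁻¹)
      exact ⟨u₁, u₂, rfl, t, r, htr, by simpa [mul_assoc] using hu₁.mul hb, hu₂⟩
    · obtain ⟨rfl, hs⟩ := List.append_inj' (hw.trans (List.append_assoc ..).symm) rfl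
      obtain ⟨u₁, u₂, rfl, t, r, htr, hu₁, hu₂⟩ := ihm (congrArg _ hs)
      exact ⟨l ++ u₁, u₂, by simp, t, r, htr, by simpa [mul_assoc] using hl.mul hu₁, hu₂⟩
  | @transfer j k _ _ _ hab _ ih =>
    obtain ⟨u₁, u₂, rfl, t, r, htr, hu₁, hu₂⟩ := ih hw
    cases hab with
    | refl => exact ⟨u₁, u₂, rfl, t, r, htr, hu₁, hu₂⟩
    | map c =>
      cases htr with
      | refl =>
        exact ⟨[], u₁ ++ u₂, rfl, φ _ c, _, .map c,
          by simpa using one_nil, by simpa [mul_assoc] using hu₁.mul hu₂⟩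
      | map d =>
        have h_map : LEProd φ Q (φ j (c * d⁻¹)) u₁ := by simpa using hu₁
        exact ⟨u₁, u₂, rfl, φ i d, φ k d, .map d, by simpa using h_map.transfer_map (k := k), hu₂⟩

theorem mul_of_concat_of_cons {x y : G k} {a b : G i} (hx : LEProd φ Q x (u ++ [⟨i, a⟩]))
    (hy : LEProd φ Q y (⟨i, b⟩ :: v)) : LEProd φ Q (x * y) (u ++ ⟨i, a * b⟩ :: v) := by
  obtain ⟨u₁, u₂, rfl, t, r, htr, hu₁, hu₂⟩ := exists_of_concat hconj hφ hx
  obtain ⟨v₁, v₂, rfl, t', r', htr', hv₁, hv₂⟩ := exists_of_cons hconj hφ hy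
  have h_middle : LEProd φ Q (t * t') (u₂ ++ (⟨i, a * b⟩ :: v₁)) := by
    simpa [mul_assoc] using hu₂.mul ((letter (a * b)).mul hv₁)
  simpa [mul_assoc] using hu₁.mul ((transfer (htr.mul htr') h_middle).mul hv₂)

theorem mul_letters {x : G k} {a b : G i} (h : LEProd φ Q x (u ++ ⟨i, a⟩ :: ⟨i, b⟩ :: v)) :
    LEProd φ Q x (u ++ ⟨i, a * b⟩ :: v) := by
  generalize hw : u ++ ⟨i, a⟩ :: ⟨i, b⟩ :: v = w at h
  induction h generalizing u v with
  | nil => simp at hw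
  | letter => simp [List.append_eq_singleton_iff] at hw
  | @mul _ _ _ l m hl hm ihl ihm =>
    rcases List.append_eq_append_iff.1 hw with ⟨_ | ⟨s, _ | ⟨s', w⟩⟩, rfl, hv⟩ | ⟨w, rfl, rfl⟩
    · simpa using hl.mul (ihm (u := []) hv)
    · obtain ⟨rfl, rfl⟩ := List.cons.inj hv
      exact mul_of_concat_of_cons hconj hφ hl hm
    · obtain ⟨rfl, rfl, rfl⟩ : ⟨i, a⟩ = s ∧ ⟨i, b⟩ = s' ∧ v = w ++ m := by simpa using hv
      simpa using (ihl rfl).mul hm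
    · simpa using hl.mul (ihm rfl)
  | transfer hab _ ih => exact .transfer hab (ih hw)

end Inversion

/-- The syntactic congruence of derivability: two words are congruent if, inside any larger word,
they are above the same elements of the factors. -/
def con (φ : ∀ i, H →* G i) (Q : ∀ i, Submonoid (G i)) : Con (FreeMonoid (Σ i, G i)) where
  r l m := ∀ (u v : List (Σ i, G i)) (k : ι) (x : G k),
    LEProd φ Q x (u ++ (l.toList ++ v)) ↔ LEProd φ Q x (u ++ (m.toList ++ v))
  iseqv :=
    { refl := fun _ _ _ _ _ => Iff.rfl
      symm := fun h u v k x => (h u v k x).symm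
      trans := fun h h' u v k x => (h u v k x).trans (h' u v k x) }
  mul' {l m l' m'} h h' u v k x := by
    have h₁ := h u (l'.toList ++ v) k x
    have h₂ := h' (u ++ m.toList) v k x
    simp only [List.append_assoc] at h₂
    simpa using h₁.trans h₂

section Value

variable (hconj : ∀ i, ∀ x ∈ Q i, ∀ g : G i, g⁻¹ * x * g ∈ Q i)
  (hφ : ∀ i j h, φ i h ∈ Q i → φ j h ∈ Q j)

/-- Sending an element of a factor to the class of the corresponding one-letter word. -/
def factorHom (i : ι) : G i →* (con φ Q).Quotient where
  toFun a := (con φ Q).mk' (.of ⟨i, a⟩)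
  map_one' := (Con.eq _).2 fun _ _ _ _ =>
    ⟨replace_letter (s := ⟨i, 1⟩) one_nil, insert (one_letter (one_mem _))⟩
  map_mul' a b := (Con.eq _).2 fun _ _ _ _ =>
    ⟨replace_letter (s := ⟨i, a * b⟩) ((letter a).mul (letter b)), mul_letters hconj hφ⟩

theorem factorHom_comp (i j : ι) :
    (factorHom hconj hφ i).comp (φ i) = (factorHom hconj hφ j).comp (φ j) := by
  ext h
  have replace : ∀ i j, LEProd φ Q (φ i h) [⟨j, φ j h⟩] := fun i j =>
    .transfer (.map h) (letter (φ j h))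
  exact (Con.eq _).2 fun _ _ _ _ => ⟨replace_letter (s := ⟨i, φ i h⟩) (replace i j),
    replace_letter (s := ⟨j, φ j h⟩) (replace j i)⟩

end Value

end LEProd

/-- The value of a word in the amalgam. -/
def wordProd (φ : ∀ i, H →* G i) : FreeMonoid (Σ i, G i) →* Monoid.PushoutI φ :=
  FreeMonoid.lift fun s => Monoid.PushoutI.of s.1 s.2

theorem wordProd_of (φ : ∀ i, H →* G i) {i : ι} (a : G i) :
    wordProd φ (.of ⟨i, a⟩) = Monoid.PushoutI.of i a :=
  FreeMonoid.lift_eval_of _ _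

theorem wordProd_surjective [Nonempty ι] (φ : ∀ i, H →* G i) :
    Function.Surjective (wordProd φ) := by
  intro y
  induction y using Monoid.PushoutI.induction_on with
  | of i a => exact ⟨.of ⟨i, a⟩, wordProd_of φ a⟩
  | base h =>
    obtain ⟨i⟩ := ‹Nonempty ι›
    exact ⟨.of ⟨i, φ i h⟩, (wordProd_of φ _).trans (Monoid.PushoutI.of_apply_eq_base φ i h)⟩
  | mul x y hx hy =>
    obtain ⟨l, rfl⟩ := hx
    obtain ⟨m, rfl⟩ := hy
    exact ⟨l * m, map_mul _ l m⟩

section NormalSubmonoids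

variable {φ : ∀ i, H →* G i} {Q : ∀ i, Submonoid (G i)}
  (hconj : ∀ i, ∀ x ∈ Q i, ∀ g : G i, g⁻¹ * x * g ∈ Q i)
  (hφ : ∀ i j h, φ i h ∈ Q i → φ j h ∈ Q j)

include hconj hφ

theorem LEProd.of_wordProd_eq {l m : FreeMonoid (Σ i, G i)} (hlm : wordProd φ l = wordProd φ m)
    {k : ι} {x : G k} (h : LEProd φ Q x l.toList) : LEProd φ Q x m.toList := by
  let F : Monoid.PushoutI φ →* (con φ Q).Quotient :=
    Monoid.PushoutI.lift (factorHom hconj hφ) ((factorHom hconj hφ k).comp (φ k))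
      fun j => factorHom_comp hconj hφ j k
  have hF : F.comp (wordProd φ) = (con φ Q).mk' := FreeMonoid.hom_eq fun s =>
    (congrArg F (wordProd_of φ s.2)).trans (Monoid.PushoutI.lift_of _ _ _ s.2)
  have hcon : con φ Q l m := by
    rw [← Con.eq, ← Con.coe_mk', ← hF, MonoidHom.comp_apply, hlm, MonoidHom.comp_apply]
  simpa using (hcon [] [] k x).1 (by simpa using h)

theorem exists_wordProd_eq_and_one_leProd (i : ι) {y : Monoid.PushoutI φ}
    (hy : y ∈ normalMonoidClosure (⋃ j, Monoid.PushoutI.of (φ := φ) j '' (Q j : Set (G j)))) :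
    ∃ l, wordProd φ l = y ∧ LEProd φ Q (1 : G i) l.toList := by
  have : Nonempty ι := ⟨i⟩
  induction hy using Submonoid.closure_induction with
  | one => exact ⟨1, map_one _, .one_nil⟩
  | mul y z _ _ hy hz =>
    obtain ⟨l, rfl, hl⟩ := hy
    obtain ⟨m, rfl, hm⟩ := hz
    exact ⟨l * m, map_mul _ l m, by simpa using hl.mul hm⟩
  | mem y hy =>
    obtain ⟨_, hs, hsy⟩ := Group.mem_conjugatesOfSet_iff.1 hy
    obtain ⟨j, p, hp, rfl⟩ := Set.mem_iUnion.1 hs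
    obtain ⟨g, rfl⟩ := isConj_iff.1 hsy
    obtain ⟨l, hl⟩ := wordProd_surjective φ g
    obtain ⟨m, hm⟩ := wordProd_surjective φ g⁻¹
    have hlm : LEProd φ Q (1 : G i) (l * m).toList :=
      .of_wordProd_eq hconj hφ (l := 1) (by simp [hl, hm]) .one_nil
    refine ⟨l * (.of ⟨j, p⟩ * m), by simp [hl, hm, wordProd_of, mul_assoc], ?_⟩
    exact LEProd.insert (.one_letter hp) hlm

theorem mem_of_of_mem_normalMonoidClosure {i : ι} {x : G i}
    (hx : Monoid.PushoutI.of (φ := φ) i x ∈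
      normalMonoidClosure (⋃ j, Monoid.PushoutI.of (φ := φ) j '' (Q j : Set (G j)))) :
    x ∈ Q i := by
  obtain ⟨l, hl, h_one⟩ := exists_wordProd_eq_and_one_leProd hconj hφ i hx
  have h_inv : LEProd φ Q x⁻¹ (.of ⟨i, x⁻¹⟩ * l : FreeMonoid (Σ i, G i)).toList := by
    simpa using (LEProd.letter x⁻¹).mul h_one
  have h_nil : LEProd φ Q x⁻¹ (1 : FreeMonoid (Σ i, G i)).toList :=
    h_inv.of_wordProd_eq hconj hφ (by rw [map_mul, hl, wordProd_of, ← map_mul]; simp)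
  simpa using h_nil.inv_mem_of_nil hφ

end NormalSubmonoids

end Amalgam

/-- If `P i` is a normal subsemigroup of `G i` for each `i`, with `P i ∩ C = P j ∩ C`
for all `i, j`, then in the amalgam `G = *_C G i`,
`G i ∩ NSS_G(⋃ j, P j) = P i` for every `i`. -/
theorem factor_inter_nss_eq {ι : Type*} {G : ι → Type*} [∀ i, Group (G i)]
    {H : Type*} [Group H] (φ : ∀ i, H →* G i) (hφ : ∀ i, Function.Injective (φ i))
    (P : ∀ i, Set (G i)) (hP : ∀ i, IsNormalSubsemigroup (P i))
    (hPC : ∀ i j (h : H), φ i h ∈ P i ↔ φ j h ∈ P j) (i : ι) (x : G i) :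
    Monoid.PushoutI.of (φ := φ) i x ∈
        nss (Monoid.PushoutI φ) (⋃ j, Monoid.PushoutI.of (φ := φ) j '' P j) ↔
      x ∈ P i := by
  have mem_withOne : ∀ {j} {a : G j}, Monoid.PushoutI.of (φ := φ) j a ∈
      normalMonoidClosure (⋃ j, Monoid.PushoutI.of (φ := φ) j '' P j) →
      a ∈ (hP j).withOne := fun ha =>
    mem_of_of_mem_normalMonoidClosure (fun j _ hb => (hP j).conj_mem_withOne hb)
      (fun j k h => (hP j).map_mem_withOne (hφ j) (φ k) (hP k) (hPC j k h).1)
      (normalMonoidClosure_mono (Set.iUnion_mono fun _ => Set.image_mono fun _ => .inr) ha)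
  refine ⟨fun hx => ?_, fun hx => subset_nss (Set.mem_iUnion.2 ⟨i, x, hx, rfl⟩)⟩
  rcases mem_withOne (nss_subset_normalMonoidClosure hx) with rfl | hxP
  · rw [map_one] at hx
    obtain ⟨_, hs, hs_inv⟩ := exists_inv_mem_normalMonoidClosure_of_one_mem_nss hx
    obtain ⟨j, p, hp, rfl⟩ := Set.mem_iUnion.1 hs
    have one_mem : (1 : G j) ∈ P j :=
      (hP j).one_mem_of_inv_mem_withOne hp (mem_withOne (by rwa [map_inv]))
    simpa using (hPC j i 1).1 (by rwa [map_one])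
  · exact hxP
end

section
/- Let G = *_C G_i (i ∈ I) be an amalgamated free product. Suppose no element of ∪_{i∈I} G_i is a generalized torsion element of G. Then for each i ∈ I there is a family F_i of normal subsemigroups of G_i satisfying: (1) G_i \ {1} = ∪_{P ∈ F_i} P for every i; (2) for all i, j ∈ I and each P ∈ F_i there is Q ∈ F_j with P ∩ C = Q ∩ C. Conversely, if such families exist, then no element of ∪_{i∈I} G_i is generalized torsion in G. -/
/-- `g` is a generalized torsion element: `g ≠ 1` and some nonempty finite product of
conjugates of `g` equals `1`. -/
def IsGenTorsion {G : Type*} [Group G] (g : G) : Prop :=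
  g ≠ 1 ∧ ∃ l : List G, l ≠ [] ∧ (l.map fun h => h⁻¹ * g * h).prod = 1

/-!
Let `M i` be normal submonoids of the factors that agree on `C`. Call a word in elements of the
factors `≥ g` if this can be derived by replacing subwords by single elements of a factor, with
elements of `M i` deleted along the way. Since each step takes place inside a single factor, the
empty word is `≥ g` only if `g⁻¹ ∈ M i`. Derivability is invariant under the defining relations of
the amalgam; the only delicate one is merging two adjacent letters that a derivation uses in
different places, where the two halves of the derivation are cut open at these letters and
reassembled. Hence the relation descends to the amalgam, where the elements `≥ 1` contain all
conjugates of all `M j` but meet `G i` in `M i` only.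

If `g ∈ P i` is generalized torsion and `1 ∉ P i`, then `g⁻¹` is a product of conjugates
of `g`, so the above with `M j = P j ∪ {1}` gives `g⁻¹ ∈ P i ∪ {1}` and thus `1 ∈ P i`. In the other
direction, the families consist of the preimages in the factors of the normal subsemigroups of the
amalgam generated by a single nontrivial element of a factor.
-/

section Amalgam

variable {ι : Type*} {G : ι → Type*} [∀ i, Group (G i)] {H : Type*} [Group H]

/-- Normal submonoids `M i` of the factors `G i` of an amalgam that cut out the same subset of the
common subgroup `H`. They play the role of the sets `P i ∪ {1}` in the paper. -/
structure CompatibleCones (φ : ∀ i, H →* G i) (M : ∀ i, Submonoid (G i)) : Prop where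
  conj_mem {i : ι} {m : G i} (hm : m ∈ M i) (g : G i) : g * m * g⁻¹ ∈ M i
  map_mem {i : ι} {c : H} (hc : φ i c ∈ M i) (j : ι) : φ j c ∈ M j

/-- The identifications made by the amalgam between elements of two factors, possibly the same one:
equality, and coming from the same element of `H`. -/
inductive Glued (φ : ∀ i, H →* G i) {i : ι} : ∀ {j : ι}, G i → G j → Prop
  | refl (g : G i) : Glued φ g g
  | base (j : ι) (c : H) : Glued φ (φ i c) (φ j c)

theorem Glued.mul {φ : ∀ i, H →* G i} {i j : ι} {x y : G i} {x' y' : G j} (hx : Glued φ x x')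
    (hy : Glued φ y y') : Glued φ (x * y) (x' * y') := by
  cases hx with
  | refl =>
    cases hy with
    | refl => exact .refl _
    | base => exact .refl _
  | base _ c =>
    cases hy with
    | refl => exact .refl _
    | base _ d => simpa only [map_mul] using Glued.base (φ := φ) (i := i) j (c * d)

/-- `w ≥ g`, for a word `w` in the elements of the factors and an element `g` of a factor: evidence,
obtained by computing in one factor at a time, that in the amalgam the product of `w` becomes `g`
after deleting some conjugates of elements of the `M i`. -/
inductive Dominates (φ : ∀ i, H →* G i) (M : ∀ i, Submonoid (G i)) :
    List (Σ i, G i) → ∀ {i : ι}, G i → Prop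
  | nil (i : ι) : Dominates φ M [] (1 : G i)
  | letter {i : ι} (g : G i) : Dominates φ M [⟨i, g⟩] g
  | append {w₁ w₂ : List (Σ i, G i)} {i : ι} {g h : G i} :
      Dominates φ M w₁ g → Dominates φ M w₂ h → Dominates φ M (w₁ ++ w₂) (g * h)
  | transfer {w : List (Σ i, G i)} {i : ι} {c : H} (j : ι) :
      Dominates φ M w (φ i c) → Dominates φ M w (φ j c)
  | of_mul {w : List (Σ i, G i)} {i : ι} {m g : G i} :
      m ∈ M i → Dominates φ M w (m * g) → Dominates φ M w g

namespace Dominates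

variable {φ : ∀ i, H →* G i} {M : ∀ i, Submonoid (G i)} {u v w x y : List (Σ i, G i)} {i j : ι}

theorem transfer_one (hw : Dominates φ M w (1 : G i)) (j : ι) : Dominates φ M w (1 : G j) := by
  rw [← map_one (φ i)] at hw
  simpa only [map_one] using hw.transfer j

theorem letter_of_mem {m : G i} (hm : m ∈ M i) (j : ι) : Dominates φ M [⟨i, m⟩] (1 : G j) :=
  transfer_one (of_mul hm (by simpa only [mul_one] using letter m)) j

theorem of_glued {g : G i} {h : G j} (hw : Dominates φ M w g) (hgh : Glued φ g h) :
    Dominates φ M w h := by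
  cases hgh with
  | refl => exact hw
  | base => exact hw.transfer j

theorem inv_mem_of_nil (hM : CompatibleCones φ M) {g : G i} (h : Dominates φ M [] g) :
    g⁻¹ ∈ M i := by
  generalize hw : ([] : List (Σ i, G i)) = w at h
  induction h with
  | nil => simp
  | letter => cases hw
  | append _ _ ih₁ ih₂ =>
    obtain ⟨rfl, rfl⟩ := List.append_eq_nil_iff.1 hw.symm
    simpa only [mul_inv_rev] using mul_mem (ih₂ rfl) (ih₁ rfl)
  | transfer j _ ih =>
    rw [← map_inv] at ih ⊢
    exact hM.map_mem (ih hw) j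
  | of_mul hm _ ih => simpa using mul_mem (ih hw) hm

theorem of_mul_mul (hM : CompatibleCones φ M) {a m g : G i} (hm : m ∈ M i)
    (h : Dominates φ M w (a * (m * g))) : Dominates φ M w (a * g) :=
  of_mul (hM.conj_mem hm a) (by simpa only [mul_assoc, inv_mul_cancel_left] using h)

/-- The derivation evaluates the initial segment `b v₁` to `y` in the factor of `b`, and `y'` is
the value of this segment in the factor of `h`. -/
theorem exists_of_cons (hM : CompatibleCones φ M) {b : G j} {h : G i}
    (hd : Dominates φ M (⟨j, b⟩ :: v) h) :
    ∃ v₁ v₂, v = v₁ ++ v₂ ∧ ∃ (y : G j) (y' : G i), Glued φ y y' ∧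
      Dominates φ M v₁ (b⁻¹ * y) ∧ Dominates φ M v₂ (y'⁻¹ * h) := by
  generalize hw : (⟨j, b⟩ :: v : List (Σ i, G i)) = w at hd
  induction hd generalizing v with
  | nil => cases hw
  | letter =>
    cases hw
    exact ⟨[], [], rfl, b, b, .refl b, by simpa using nil j, by simpa using nil j⟩
  | append h₁ h₂ ih₁ ih₂ =>
    rcases List.cons_eq_append_iff.1 hw with ⟨rfl, rfl⟩ | ⟨v', rfl, rfl⟩
    · obtain ⟨v₁, v₂, rfl, y, y', hy, hv₁, hv₂⟩ := ih₂ rfl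
      exact ⟨v₁, v₂, rfl, y, y', hy, hv₁,
        of_mul_mul hM (h₁.inv_mem_of_nil hM) (by simpa only [inv_mul_cancel_left] using hv₂)⟩
    · obtain ⟨v₁, v₂, rfl, y, y', hy, hv₁, hv₂⟩ := ih₁ rfl
      exact ⟨v₁, _, List.append_assoc .., y, y', hy, hv₁,
        by simpa only [mul_assoc] using hv₂.append h₂⟩
  | @transfer _ k c l _ ih =>
    obtain ⟨v₁, v₂, rfl, y, y', hy, hv₁, hv₂⟩ := ih hw
    cases hy with
    | refl =>
      exact ⟨v₁ ++ v₂, [], (List.append_nil _).symm, φ j c, φ l c, .base ..,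
        by simpa only [mul_assoc, mul_inv_cancel_left] using hv₁.append hv₂,
        by simpa only [inv_mul_cancel] using nil l⟩
    | base _ d =>
      refine ⟨v₁, v₂, rfl, _, φ l d, .base .., hv₁, ?_⟩
      rw [← map_inv, ← map_mul] at hv₂ ⊢
      exact hv₂.transfer l
  | of_mul hm _ ih =>
    obtain ⟨v₁, v₂, rfl, y, y', hy, hv₁, hv₂⟩ := ih hw
    exact ⟨v₁, v₂, rfl, y, y', hy, hv₁, of_mul_mul hM hm hv₂⟩

theorem exists_of_concat (hM : CompatibleCones φ M) {a : G j} {h : G i}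
    (hd : Dominates φ M (u ++ [⟨j, a⟩]) h) :
    ∃ u₁ u₂, u = u₁ ++ u₂ ∧ ∃ (x : G j) (x' : G i), Glued φ x x' ∧
      Dominates φ M u₁ (h * x'⁻¹) ∧ Dominates φ M u₂ (x * a⁻¹) := by
  generalize hw : (u ++ [⟨j, a⟩] : List (Σ i, G i)) = w at hd
  induction hd generalizing u with
  | nil => simp at hw
  | letter =>
    obtain ⟨rfl, h⟩ := List.append_eq_singleton_iff.1 hw |>.resolve_right (by simp)
    cases h
    exact ⟨[], [], rfl, a, a, .refl a, by simpa using nil j, by simpa using nil j⟩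
  | @append w₁ w₂ _ g _ h₁ h₂ ih₁ ih₂ =>
    rcases List.eq_nil_or_concat' w₂ with rfl | ⟨u', p, rfl⟩
    · obtain ⟨u₁, u₂, rfl, x, x', hx, hu₁, hu₂⟩ := ih₁ (by simpa using hw)
      refine ⟨u₁, u₂, rfl, x, x', hx, of_mul (hM.conj_mem (h₂.inv_mem_of_nil hM) g) ?_, hu₂⟩
      simpa only [mul_assoc, inv_mul_cancel_left] using hu₁
    · rw [← List.append_assoc] at hw
      obtain ⟨rfl, h⟩ := List.append_inj' hw rfl
      obtain ⟨u₁, u₂, rfl, x, x', hx, hu₁, hu₂⟩ := ih₂ (by rw [h])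
      exact ⟨_, u₂, (List.append_assoc ..).symm, x, x', hx,
        by simpa only [mul_assoc] using h₁.append hu₁, hu₂⟩
  | @transfer _ k c l _ ih =>
    obtain ⟨u₁, u₂, rfl, x, x', hx, hu₁, hu₂⟩ := ih hw
    cases hx with
    | refl =>
      exact ⟨[], u₁ ++ u₂, rfl, φ j c, φ l c, .base ..,
        by simpa only [mul_inv_cancel] using nil l,
        by simpa only [mul_assoc, inv_mul_cancel_left] using hu₁.append hu₂⟩
    | base _ d =>
      refine ⟨u₁, u₂, rfl, _, φ l d, .base .., ?_, hu₂⟩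
      rw [← map_inv, ← map_mul] at hu₁ ⊢
      exact hu₁.transfer l
  | of_mul hm _ ih =>
    obtain ⟨u₁, u₂, rfl, x, x', hx, hu₁, hu₂⟩ := ih hw
    exact ⟨u₁, u₂, rfl, x, x', hx, of_mul hm (by simpa only [mul_assoc] using hu₁), hu₂⟩

/-- Derivations treat a subword `x` as a unit, except where an `append` cuts through it. -/
theorem replace_subword (hnil : x = [] → ∀ i, Dominates φ M y (1 : G i))
    (hletter : ∀ p, x = [p] → Dominates φ M y p.2)
    (hsplit : ∀ x₁ x₂, x₁ ≠ [] → x₂ ≠ [] → x = x₁ ++ x₂ → ∀ (u v) {i} {g h : G i},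
      Dominates φ M (u ++ x₁) g → Dominates φ M (x₂ ++ v) h → Dominates φ M (u ++ y ++ v) (g * h))
    {h : G i} (hd : Dominates φ M (u ++ x ++ v) h) : Dominates φ M (u ++ y ++ v) h := by
  generalize hw : u ++ x ++ v = w at hd
  induction hd generalizing u v with
  | nil i =>
    simp only [List.append_eq_nil_iff] at hw
    obtain ⟨⟨rfl, rfl⟩, rfl⟩ := hw
    simpa using hnil rfl i
  | letter g =>
    rcases List.append_eq_singleton_iff.1 hw with ⟨hux, rfl⟩ | ⟨hux, rfl⟩
    · obtain ⟨rfl, rfl⟩ := List.append_eq_nil_iff.1 hux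
      simpa only [List.nil_append, one_mul] using (hnil rfl _).append (letter g)
    rcases List.append_eq_singleton_iff.1 hux with ⟨rfl, rfl⟩ | ⟨rfl, rfl⟩
    · simpa using hletter _ rfl
    · simpa using (letter g).append (hnil rfl _)
  | append h₁ h₂ ih₁ ih₂ =>
    rcases List.append_eq_append_iff.1 hw with ⟨z, rfl, rfl⟩ | ⟨z, h₃, rfl⟩
    · simpa only [List.append_assoc] using (ih₁ rfl).append h₂
    rcases List.append_eq_append_iff.1 h₃ with ⟨x₁, rfl, rfl⟩ | ⟨x₁, rfl, rfl⟩
    · rcases eq_or_ne x₁ [] with rfl | hx₁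
      · simpa using h₁.append (ih₂ (u := []) rfl)
      rcases eq_or_ne z [] with rfl | hz
      · simpa using (ih₁ (v := []) (by simp)).append h₂
      exact hsplit x₁ z hx₁ hz rfl u v h₁ h₂
    · simpa only [List.append_assoc] using h₁.append (ih₂ rfl)
  | transfer j _ ih => exact (ih hw).transfer j
  | of_mul hm _ ih => exact of_mul hm (ih hw)

theorem replace_letter {p : Σ i, G i} {h : G i} (hw : Dominates φ M w p.2)
    (hd : Dominates φ M (u ++ [p] ++ v) h) : Dominates φ M (u ++ w ++ v) h := by
  refine replace_subword (by simp) ?_ ?_ hd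
  · rintro q hq
    obtain rfl := List.singleton_injective hq
    exact hw
  · intro x₁ x₂ hx₁ hx₂ hx
    rcases List.singleton_eq_append_iff.1 hx with ⟨h, -⟩ | ⟨-, h⟩
    · exact absurd h hx₁
    · exact absurd h hx₂

theorem insert_subword {h : G i} (hw : Dominates φ M w (1 : G j)) (hd : Dominates φ M (u ++ v) h) :
    Dominates φ M (u ++ w ++ v) h := by
  refine replace_subword (x := []) (fun _ ↦ hw.transfer_one) (by simp) ?_ (by simpa using hd)
  intro x₁ x₂ hx₁ _ hx
  exact absurd (List.append_eq_nil_iff.1 hx.symm).1 hx₁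

theorem append_mul_letter (hM : CompatibleCones φ M) {a b : G j} {g h : G i}
    (hu : Dominates φ M (u ++ [⟨j, a⟩]) g) (hv : Dominates φ M (⟨j, b⟩ :: v) h) :
    Dominates φ M (u ++ [⟨j, a * b⟩] ++ v) (g * h) := by
  obtain ⟨u₁, u₂, rfl, x, x', hx, hu₁, hu₂⟩ := hu.exists_of_concat hM
  obtain ⟨v₁, v₂, rfl, y, y', hy, hv₁, hv₂⟩ := hv.exists_of_cons hM
  have hmid : Dominates φ M (u₂ ++ [⟨j, a * b⟩] ++ v₁) (x * y) := by
    simpa [mul_assoc] using (hu₂.append (letter (a * b))).append hv₁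
  simpa [mul_assoc] using (hu₁.append (hmid.of_glued (hx.mul hy))).append hv₂

theorem merge_letters (hM : CompatibleCones φ M) {a b : G j} {h : G i}
    (hd : Dominates φ M (u ++ [⟨j, a⟩, ⟨j, b⟩] ++ v) h) :
    Dominates φ M (u ++ [⟨j, a * b⟩] ++ v) h := by
  refine replace_subword (by simp) (by simp) ?_ hd
  intro x₁ x₂ hx₁ hx₂ hx u v k g h hu hv
  obtain ⟨rfl, rfl⟩ : x₁ = [⟨j, a⟩] ∧ x₂ = [⟨j, b⟩] := by
    rcases List.cons_eq_append_iff.1 hx with ⟨h, -⟩ | ⟨t, rfl, ht⟩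
    · exact absurd h hx₁
    rcases List.singleton_eq_append_iff.1 ht with ⟨rfl, rfl⟩ | ⟨-, h⟩
    · exact ⟨rfl, rfl⟩
    · exact absurd h hx₂
  exact append_mul_letter hM hu hv

/-- The syntactic congruence of `Dominates`: two words are identified if exchanging them inside any
word does not change which elements that word dominates. -/
def syntacticCon (φ : ∀ i, H →* G i) (M : ∀ i, Submonoid (G i)) : Con (FreeMonoid (Σ i, G i)) where
  r x y := ∀ (u v : List (Σ i, G i)) {i : ι} (h : G i),
    Dominates φ M (u ++ x.toList ++ v) h ↔ Dominates φ M (u ++ y.toList ++ v) h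
  iseqv := ⟨fun _ _ _ _ _ ↦ .rfl, fun hxy u v _ h ↦ (hxy u v h).symm,
    fun hxy hyz u v _ h ↦ (hxy u v h).trans (hyz u v h)⟩
  mul' {x x' y y'} hx hy u v _ h := by
    simpa using (hx u (y.toList ++ v) h).trans (by simpa using hy (u ++ x'.toList) v h)

theorem iff_of_syntacticCon {x y : FreeMonoid (Σ i, G i)} (hxy : syntacticCon φ M x y)
    {i : ι} (h : G i) : Dominates φ M x.toList h ↔ Dominates φ M y.toList h := by
  simpa using hxy [] [] h

/-- The words `w ≥ 1`. -/
def dominatingSubmonoid (φ : ∀ i, H →* G i) (M : ∀ i, Submonoid (G i)) (i : ι) :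
    Submonoid (FreeMonoid (Σ i, G i)) where
  carrier := {w | Dominates φ M w.toList (1 : G i)}
  one_mem' := .nil i
  mul_mem' hv hw := by simpa using Dominates.append hv hw

end Dominates

namespace CompatibleCones

open Monoid Monoid.PushoutI Dominates

variable {φ : ∀ i, H →* G i} {M : ∀ i, Submonoid (G i)}

/-- The factor `G i` as one-letter words modulo the syntactic congruence. -/
def letterHom (hM : CompatibleCones φ M) (i : ι) : G i →* (syntacticCon φ M).Quotient where
  toFun g := (syntacticCon φ M).mk' (FreeMonoid.of ⟨i, g⟩)
  map_one' := (Con.eq _).2 fun u v _ _ ↦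
    ⟨(Dominates.nil i).replace_letter,
      fun hd ↦ (Dominates.letter 1).insert_subword (by simpa using hd)⟩
  map_mul' a b := (Con.eq _).2 fun u v _ _ ↦
    ⟨((Dominates.letter a).append (.letter b)).replace_letter, .merge_letters hM⟩

theorem letterHom_comp (hM : CompatibleCones φ M) (i j : ι) :
    (hM.letterHom i).comp (φ i) = (hM.letterHom j).comp (φ j) := by
  ext c
  exact (Con.eq _).2 fun u v _ _ ↦
    ⟨((Dominates.letter (φ j c)).transfer i).replace_letter,
      ((Dominates.letter (φ i c)).transfer j).replace_letter⟩

/-- The homomorphism from the amalgam induced by the `letterHom`s, by which `Dominates` descends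
from words to the amalgam. The index `i` only provides the map on `H`. -/
def syntacticHom (hM : CompatibleCones φ M) (i : ι) :
    PushoutI φ →* (syntacticCon φ M).Quotient :=
  lift (hM.letterHom) ((hM.letterHom i).comp (φ i)) fun j ↦ hM.letterHom_comp j i

/-- The elements of the amalgam represented by words `w ≥ 1`, with `1` taken in `G i`. -/
def dominatingElements (hM : CompatibleCones φ M) (i : ι) : Submonoid (PushoutI φ) :=
  ((dominatingSubmonoid φ M i).map (syntacticCon φ M).mk').comap (hM.syntacticHom i)

theorem syntacticHom_of (hM : CompatibleCones φ M) (i : ι) {j : ι} (g : G j) :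
    hM.syntacticHom i (of j g) = (syntacticCon φ M).mk' (FreeMonoid.of ⟨j, g⟩) :=
  lift_of _ _ _ g

theorem conj_mem_dominatingElements (hM : CompatibleCones φ M) (i : ι) {j : ι} {m : G j}
    (hm : m ∈ M j) (a : PushoutI φ) : a * of j m * a⁻¹ ∈ hM.dominatingElements i := by
  obtain ⟨u, hu⟩ := Con.mk'_surjective (hM.syntacticHom i a)
  obtain ⟨v, hv⟩ := Con.mk'_surjective (hM.syntacticHom i a⁻¹)
  have huv : syntacticCon φ M (u * v) 1 := (Con.eq _).1 <| by
    rw [← Con.coe_mk', map_mul, hu, hv, ← map_mul, mul_inv_cancel, map_one, map_one]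
  refine ⟨u * FreeMonoid.of ⟨j, m⟩ * v, ?_, by simp only [map_mul, hu, hv, syntacticHom_of]⟩
  have h1 : Dominates φ M (u * v).toList (1 : G i) :=
    (iff_of_syntacticCon huv 1).2 (.nil i)
  exact (Dominates.letter_of_mem hm j).insert_subword h1

theorem comap_dominatingElements_le (hM : CompatibleCones φ M) (i : ι) :
    (hM.dominatingElements i).comap (of i) ≤ M i := by
  rintro g ⟨w, hw, hwg⟩
  have hgw : syntacticCon φ M w (FreeMonoid.of ⟨i, g⟩) :=
    (Con.eq _).1 (hwg.trans (hM.syntacticHom_of i g))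
  have hg : Dominates φ M [⟨i, g⟩] (1 : G i) := (iff_of_syntacticCon hgw 1).1 hw
  have hcancel : syntacticCon φ M (FreeMonoid.of ⟨i, g⟩ * FreeMonoid.of ⟨i, g⁻¹⟩) 1 :=
    (Con.eq _).1 <| by
      rw [← Con.coe_mk', map_mul, ← hM.syntacticHom_of i, ← hM.syntacticHom_of i, ← map_mul,
        ← map_mul, mul_inv_cancel, map_one, map_one, map_one]
  have hnil : Dominates φ M [] (1 * g⁻¹) :=
    (iff_of_syntacticCon hcancel _).1 (hg.append (.letter g⁻¹))
  simpa using hnil.inv_mem_of_nil hM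

theorem comap_closure_conjugatesOfSet (hM : CompatibleCones φ M) (i : ι) :
    (Submonoid.closure (Group.conjugatesOfSet (⋃ j, of (φ := φ) j '' M j))).comap (of i) =
      M i := by
  refine le_antisymm ?_ fun m hm ↦ ?_
  · refine (Submonoid.monotone_comap (Submonoid.closure_le.2 fun x hx ↦ ?_)).trans
      (hM.comap_dominatingElements_le i)
    obtain ⟨y, hy, hyx⟩ := Group.mem_conjugatesOfSet_iff.1 hx
    obtain ⟨j, m, hm, rfl⟩ := Set.mem_iUnion.1 hy
    obtain ⟨a, rfl⟩ := isConj_iff.1 hyx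
    exact hM.conj_mem_dominatingElements i hm a
  · exact Submonoid.subset_closure
      (Group.subset_conjugatesOfSet (Set.mem_iUnion.2 ⟨i, Set.mem_image_of_mem _ hm⟩))

end CompatibleCones

end Amalgam

section NormalSubsemigroup

variable {G K : Type*} [Group G] [Group K]

namespace IsNormalSubsemigroup

/-- The normal subsemigroup `P` with `1` adjoined, as a submonoid. -/
def insertOne {P : Set G} (hP : IsNormalSubsemigroup P) : Submonoid G where
  carrier := insert 1 P
  one_mem' := Set.mem_insert 1 P
  mul_mem' := by
    rintro x y (rfl | hx) (rfl | hy)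
    · exact .inl (one_mul 1)
    · exact .inr (by rwa [one_mul])
    · exact .inr (by rwa [mul_one])
    · exact .inr (hP.1 x hx y hy)

theorem preimage {P : Set K} (hP : IsNormalSubsemigroup P) (f : G →* K) :
    IsNormalSubsemigroup (f ⁻¹' P) :=
  ⟨fun x hx y hy ↦ by simpa using hP.1 _ hx _ hy, fun x hx a ↦ by simpa using hP.2 _ hx (f a)⟩

end IsNormalSubsemigroup

/-- The normal subsemigroup generated by `g`, as the set of nonempty products of conjugates of `g`;
conjugates are written as in `IsGenTorsion`. -/
def conjProducts (g : G) : Set G :=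
  {x | ∃ l : List G, l ≠ [] ∧ (l.map fun h ↦ h⁻¹ * g * h).prod = x}

theorem mem_conjProducts_self (g : G) : g ∈ conjProducts g :=
  ⟨[1], by simp, by simp⟩

theorem isNormalSubsemigroup_conjProducts (g : G) : IsNormalSubsemigroup (conjProducts g) := by
  constructor
  · rintro _ ⟨l, hl, rfl⟩ _ ⟨l', -, rfl⟩
    exact ⟨l ++ l', by simp [hl], by simp⟩
  · rintro _ ⟨l, hl, rfl⟩ a
    refine ⟨l.map (· * a), by simpa using hl, ?_⟩
    have hconj := map_list_prod (MulAut.conj a⁻¹) (l.map fun h ↦ h⁻¹ * g * h)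
    rw [MulAut.conj_apply, inv_inv] at hconj
    rw [hconj, List.map_map, List.map_map]
    simp only [Function.comp_def, MulAut.conj_apply, mul_inv_rev, inv_inv, mul_assoc]

theorem conjProducts_subset {g : G} {N : Submonoid G} (hN : ∀ a, a⁻¹ * g * a ∈ N) :
    conjProducts g ⊆ N := by
  rintro _ ⟨l, -, rfl⟩
  exact N.list_prod_mem (List.forall_mem_map.2 fun a _ ↦ hN a)

theorem IsGenTorsion.inv_mem_conjProducts {g : G} (hg : IsGenTorsion g) : g⁻¹ ∈ conjProducts g := by
  obtain ⟨hg1, l, hl, hprod⟩ := hg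
  obtain ⟨a, t, rfl⟩ := List.exists_cons_of_ne_nil hl
  rw [List.map_cons, List.prod_cons] at hprod
  rcases eq_or_ne t [] with rfl | ht
  · exact absurd (by simpa [mul_assoc, inv_mul_eq_one, eq_comm] using hprod) hg1
  · have ht' := (isNormalSubsemigroup_conjProducts g).2 _ ⟨t, ht, rfl⟩ a⁻¹
    rw [eq_inv_of_mul_eq_one_right hprod] at ht'
    simpa [mul_assoc] using ht'

end NormalSubsemigroup

section Families

open Monoid.PushoutI

variable {ι : Type*} {G : ι → Type*} [∀ i, Group (G i)] {H : Type*} [Group H]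
  {φ : ∀ i, H →* G i}

theorem compatibleCones_insertOne (hφ : ∀ i, Function.Injective (φ i)) {P : ∀ i, Set (G i)}
    (hP : ∀ i, IsNormalSubsemigroup (P i)) (hmap : ∀ i j c, φ i c ∈ P i → φ j c ∈ P j) :
    CompatibleCones φ fun i ↦ (hP i).insertOne where
  conj_mem {i m} hm g := by
    rcases hm with rfl | hm
    · exact .inl (by simp)
    · exact .inr (by simpa using (hP i).2 m hm g⁻¹)
  map_mem {i c} hc j := by
    rcases hc with hc | hc
    · exact .inl (by rw [(map_eq_one_iff _ (hφ i)).1 hc, map_one])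
    · exact .inr (hmap i j c hc)

theorem not_isGenTorsion_of (hφ : ∀ i, Function.Injective (φ i)) {P : ∀ i, Set (G i)}
    (hP : ∀ i, IsNormalSubsemigroup (P i)) (hmap : ∀ i j c, φ i c ∈ P i → φ j c ∈ P j) {i : ι}
    {g : G i} (hg : g ∈ P i) (hone : 1 ∉ P i) : ¬ IsGenTorsion (of (φ := φ) i g) := by
  intro htors
  have hM := compatibleCones_insertOne hφ hP hmap
  have hginv : g⁻¹ ∈ (hP i).insertOne := by
    rw [← hM.comap_closure_conjugatesOfSet i, Submonoid.mem_comap, map_inv]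
    refine conjProducts_subset (fun a ↦ Submonoid.subset_closure ?_) htors.inv_mem_conjProducts
    exact Group.mem_conjugatesOfSet_iff.2 ⟨of i g, Set.mem_iUnion.2 ⟨i, g, .inr hg, rfl⟩,
      isConj_iff.2 ⟨a⁻¹, by rw [inv_inv]⟩⟩
  rcases hginv with h1 | hginv
  · exact hone (inv_eq_one.1 h1 ▸ hg)
  · exact hone (mul_inv_cancel g ▸ (hP i).1 g hg _ hginv)

/-- The traces on `G i` of the normal subsemigroups of the amalgam generated by a single nontrivial
element of a factor. -/
def conjProductsTraces (φ : ∀ i, H →* G i) (i : ι) : Set (Set (G i)) :=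
  {P | ∃ (j : ι) (g : G j), g ≠ 1 ∧ P = of (φ := φ) i ⁻¹' conjProducts (of j g)}

theorem setOf_ne_one_eq_iUnion_conjProductsTraces (hφ : ∀ i, Function.Injective (φ i))
    (htors : ∀ (i : ι) (g : G i), ¬ IsGenTorsion (of (φ := φ) i g)) (i : ι) :
    {x : G i | x ≠ 1} = ⋃ P ∈ conjProductsTraces φ i, P := by
  ext x
  simp only [conjProductsTraces, Set.mem_ofPred_eq, Set.mem_iUnion]
  constructor
  · exact fun hx ↦ ⟨_, ⟨i, x, hx, rfl⟩, mem_conjProducts_self _⟩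
  · rintro ⟨_, ⟨j, g, hg, rfl⟩, hx⟩ rfl
    rw [Set.mem_preimage, map_one] at hx
    exact htors j g ⟨(map_ne_one_iff _ (of_injective hφ j)).2 hg, hx⟩

theorem exists_compatible_section {F : ∀ i, Set (Set (G i))}
    (hF : ∀ i j, ∀ P ∈ F i, ∃ Q ∈ F j, ∀ c, φ i c ∈ P ↔ φ j c ∈ Q) {i : ι} {P : Set (G i)}
    (hP : P ∈ F i) :
    ∃ Q : ∀ j, Set (G j), Q i = P ∧ (∀ j, Q j ∈ F j) ∧ ∀ j k c, φ j c ∈ Q j → φ k c ∈ Q k := by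
  classical
  choose Q hQF hPQ using fun j ↦ hF i j P hP
  have hiff : ∀ j c, φ i c ∈ P ↔ φ j c ∈ Function.update Q i P j :=
    (Function.forall_update_iff Q fun j S ↦ ∀ c, φ i c ∈ P ↔ φ j c ∈ S).2
      ⟨fun _ ↦ .rfl, fun j _ ↦ hPQ j⟩
  exact ⟨Function.update Q i P, Function.update_self ..,
    (Function.forall_update_iff Q fun j S ↦ S ∈ F j).2 ⟨hP, fun j _ ↦ hQF j⟩,
    fun j k c hc ↦ (hiff k c).1 ((hiff j c).2 hc)⟩

end Families

/-- In an amalgam `G = *_C G i`, no element of `⋃ i, G i` is generalized torsion in `G`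
iff there exist families `F i` of normal subsemigroups of `G i` with
(1) `G i \ {1} = ⋃_{P ∈ F i} P` for every `i`, and
(2) for all `i, j` and `P ∈ F i` there is `Q ∈ F j` with `P ∩ C = Q ∩ C`. -/
theorem no_genTorsion_in_factors_iff_families {ι : Type*} {G : ι → Type*}
    [∀ i, Group (G i)] {H : Type*} [Group H] (φ : ∀ i, H →* G i)
    (hφ : ∀ i, Function.Injective (φ i)) :
    (∀ (i : ι) (g : G i), ¬ IsGenTorsion (Monoid.PushoutI.of (φ := φ) i g)) ↔
      ∃ F : ∀ i, Set (Set (G i)),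
        (∀ i, ∀ P ∈ F i, IsNormalSubsemigroup P) ∧
        (∀ i, {x : G i | x ≠ 1} = ⋃ P ∈ F i, P) ∧
        (∀ i j, ∀ P ∈ F i, ∃ Q ∈ F j, ∀ h : H, φ i h ∈ P ↔ φ j h ∈ Q) := by
  constructor
  · refine fun htors ↦ ⟨conjProductsTraces φ, ?_,
      setOf_ne_one_eq_iUnion_conjProductsTraces hφ htors, ?_⟩
    · rintro i _ ⟨j, g, -, rfl⟩
      exact (isNormalSubsemigroup_conjProducts _).preimage _
    · rintro i j _ ⟨k, g, hg, rfl⟩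
      refine ⟨_, ⟨k, g, hg, rfl⟩, fun c ↦ ?_⟩
      simp only [Set.mem_preimage, Monoid.PushoutI.of_apply_eq_base]
  · rintro ⟨F, hnormal, hcover, hcompat⟩ i g htors
    have hg : g ∈ {x : G i | x ≠ 1} := ne_of_apply_ne _ (htors.1.trans_eq (map_one _).symm)
    rw [hcover i] at hg
    obtain ⟨P, hPF, hgP⟩ := Set.mem_iUnion₂.1 hg
    obtain ⟨Q, rfl, hQF, hmap⟩ := exists_compatible_section hcompat hPF
    refine not_isGenTorsion_of hφ (fun j ↦ hnormal j _ (hQF j)) hmap hgP (fun h1 ↦ ?_) htors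
    have h1F : (1 : G i) ∈ ⋃ P ∈ F i, P := Set.mem_biUnion hPF h1
    rw [← hcover i] at h1F
    exact h1F rfl
end

section
/- Let G = A * B be a free product of groups. Then the factor A is multi-malnormal in G: for every normal subsemigroup P of A with 1 ∉ P, every product d_1^{f_1} ⋯ d_n^{f_n} with n ≥ 1, d_i ∈ P, f_i ∈ G \ A lies in G \ A. -/
/-!
The kernel of the retraction `A ∗ B → B` is the free product of the conjugates of `A` by the
elements of `B`, so a homomorphism from it may be prescribed on each conjugate separately; such
homomorphisms are coordinates of maps from `A ∗ B` into wreath products with top group `B`.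

Suppose `∏ (fᵢ⁻¹ dᵢ fᵢ) = a ∈ A`. If some `fⱼ` has image `b ≠ 1` in `B`, then projecting the kernel
to its free factor indexed by `b` kills `a`, sends each `fᵢ⁻¹ dᵢ fᵢ` to an element of `P` or to `1`,
and sends `fⱼ⁻¹ dⱼ fⱼ` into `P`; this contradicts `1 ∉ P`. So all `fᵢ` lie in the kernel. There, `A`
is again a free factor, and rewriting `fᵢ` over `A` and the other conjugates of `A` takes fewer
letters from outside `A` than before. By induction on the number of these letters, `fᵢ ∈ A`.
-/

universe u v

open Monoid Coprod

theorem prod_mem_or_forall_eq_one {M : Type*} [Monoid M] (P : Subsemigroup M) {l : List M}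
    (hl : ∀ x ∈ l, x ∈ P ∨ x = 1) : l.prod ∈ P ∨ ∀ x ∈ l, x = 1 := by
  induction l with
  | nil => simp
  | cons x l ih =>
    rw [List.forall_mem_cons] at hl ⊢
    rw [List.prod_cons]
    rcases hl.1, ih hl.2 with ⟨hx | rfl, hprod | hone⟩
    · exact .inl (mul_mem hx hprod)
    · exact .inl (by rwa [List.prod_eq_one hone, mul_one])
    · exact .inl (by rwa [one_mul])
    · exact .inr ⟨rfl, hone⟩

section

variable {A B D : Type*} [Group A] [Group B] [Group D]

/-- The product of conjugates `d₁^{f₁} ⋯ dₙ^{fₙ}` of elements of `A` by elements of `A ∗ B`, given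
by the list of the pairs `(dᵢ, fᵢ)`. -/
def conjProd (l : List (A × (A ∗ B))) : A ∗ B :=
  (l.map fun p => p.2⁻¹ * inl p.1 * p.2).prod

/-- The homomorphism from `A ∗ B` to the wreath product of `D` and `B` that is the identity on `B`
and sends `a : A` to the function `b ↦ α b a`. -/
def toWreath (α : B → A →* D) : A ∗ B →* D ≀ᵣ B :=
  lift
    { toFun := fun a => ⟨fun b => α b a, 1⟩
      map_one' := by ext <;> simp
      map_mul' := fun a a' => by ext <;> simp }
    RegularWreathProduct.inl

theorem toWreath_right (α : B → A →* D) (g : A ∗ B) : (toWreath α g).right = snd g := by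
  have h : RegularWreathProduct.rightHom.comp (toWreath α) = snd := by ext <;> rfl
  exact DFunLike.congr_fun h g

/-- The coordinates of the image of `g` in the wreath product of `D` and `B`. On the kernel of
`snd : A ∗ B →* B`, the coordinate at `1` is the homomorphism to `D` that sends the conjugate
`(inr b)⁻¹ * inl a * inr b` to `α b a`. -/
def wreathCoord (α : B → A →* D) (g : A ∗ B) : B → D := (toWreath α g).left

section wreathCoord

variable (α : B → A →* D)

@[simp]
theorem wreathCoord_inl (a : A) (x : B) : wreathCoord α (inl a) x = α x a := rfl

@[simp]
theorem wreathCoord_inr (b x : B) : wreathCoord α (inr b) x = 1 := rfl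

@[simp]
theorem wreathCoord_mul (g h : A ∗ B) (x : B) :
    wreathCoord α (g * h) x = wreathCoord α g x * wreathCoord α h ((snd g)⁻¹ * x) := by
  simp [wreathCoord, toWreath_right]

@[simp]
theorem wreathCoord_inv (g : A ∗ B) (x : B) :
    wreathCoord α g⁻¹ x = (wreathCoord α g (snd g * x))⁻¹ := by
  simp [wreathCoord, toWreath_right]

theorem wreathCoord_conjProd (l : List (A × (A ∗ B))) (x : B) :
    wreathCoord α (conjProd l) x =
      (l.map fun p => (wreathCoord α p.2 (snd p.2 * x))⁻¹ * α (snd p.2 * x) p.1 *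
        wreathCoord α p.2 (snd p.2 * x)).prod := by
  induction l with
  | nil => simp [conjProd, wreathCoord]
  | cons p l ih =>
    have hcons : conjProd (p :: l) = p.2⁻¹ * inl p.1 * p.2 * conjProd l := List.prod_cons
    rw [hcons, wreathCoord_mul, List.map_cons, List.prod_cons, ← ih]
    simp

end wreathCoord

theorem snd_eq_one_of_conjProd_mem_range_inl {P : Subsemigroup A}
    (hconj : ∀ x ∈ P, ∀ a : A, a⁻¹ * x * a ∈ P) (h1 : (1 : A) ∉ P) {l : List (A × (A ∗ B))}
    (hl : ∀ p ∈ l, p.1 ∈ P) (h : conjProd l ∈ (inl : A →* A ∗ B).range)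
    {p : A × (A ∗ B)} (hp : p ∈ l) : snd p.2 = 1 := by
  classical
  by_contra hb
  obtain ⟨a, ha⟩ := h
  let α : B → A →* A := Pi.mulSingle (snd p.2) (MonoidHom.id A)
  let proj (q : A × (A ∗ B)) : A :=
    (wreathCoord α q.2 (snd q.2))⁻¹ * α (snd q.2) q.1 * wreathCoord α q.2 (snd q.2)
  have proj_mem {q} (hq : q ∈ l) (hqp : snd q.2 = snd p.2) : proj q ∈ P := by
    simpa [proj, α, hqp] using hconj _ (hl q hq) _
  have proj_eq_one {q} (hqp : snd q.2 ≠ snd p.2) : proj q = 1 := by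
    simp [proj, α, Pi.mulSingle_eq_of_ne hqp]
  have hprod : (l.map proj).prod = 1 := calc
    (l.map proj).prod = wreathCoord α (conjProd l) 1 := by simp [wreathCoord_conjProd, proj]
    _ = α 1 a := by rw [← ha, wreathCoord_inl]
    _ = 1 := by simp [α, Pi.mulSingle_eq_of_ne' hb]
  have hproj : ∀ x ∈ l.map proj, x ∈ P ∨ x = 1 := List.forall_mem_map.2 fun q hq =>
    (eq_or_ne (snd q.2) (snd p.2)).imp (proj_mem hq) proj_eq_one
  rcases prod_mem_or_forall_eq_one P hproj with hmem | hone
  · exact h1 (hprod ▸ hmem)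
  · exact h1 (hone _ (List.mem_map_of_mem hp) ▸ proj_mem hp rfl)

open Classical in
/-- The family of homomorphisms that sends `A` to the first factor of `A ∗ (A ∗ B)` and its
conjugate by `b ≠ 1` to the copy of that conjugate in the second factor. -/
noncomputable def separateHom (b : B) : A →* A ∗ (A ∗ B) :=
  if b = 1 then inl else inr.comp ((MulAut.conj (inr b)⁻¹).toMonoidHom.comp inl)

/-- The map that, on the kernel of `snd : A ∗ B →* B`, separates the free factor `A` from the free
product of its other conjugates; the latter is placed in the second factor `A ∗ B`. It is
multiplicative on that kernel only. -/
noncomputable def separate (g : A ∗ B) : A ∗ (A ∗ B) := wreathCoord separateHom g 1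

theorem separateHom_one : (separateHom (1 : B) : A →* A ∗ (A ∗ B)) = inl := if_pos rfl

theorem separate_inl (a : A) : separate (inl a : A ∗ B) = inl a := by
  rw [separate, wreathCoord_inl, separateHom_one]

theorem separate_mul_inr_mul_inl (g : A ∗ B) (b : B) (a : A) :
    separate (g * inr b * inl a) = separate g * separateHom (snd (g * inr b))⁻¹ a := by
  simp [separate]

theorem exists_separateHom_eq_inr {b : B} (hb : b ≠ 1) (a : A) :
    ∃ g : A ∗ B, separateHom b a = inr g :=
  ⟨(inr b)⁻¹ * inl a * inr b, by simp [separateHom, hb]⟩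

theorem lift_separateHom (b : B) (a : A) :
    lift inl (MonoidHom.id (A ∗ B)) (separateHom b a) = (inr b)⁻¹ * inl a * inr b := by
  by_cases hb : b = 1 <;> simp [separateHom, hb]

theorem lift_wreathCoord_separateHom (g : A ∗ B) (x : B) :
    lift inl (MonoidHom.id (A ∗ B)) (wreathCoord separateHom g x) =
      (inr x)⁻¹ * g * (inr (snd g))⁻¹ * inr x := by
  induction g using Monoid.Coprod.induction_on generalizing x with
  | inl a => simp [lift_separateHom]
  | inr b => simp
  | mul g h hg hh => simp [hg, hh, mul_assoc]

theorem mem_range_inl_of_separate_mem {g : A ∗ B} (hg : snd g = 1)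
    (h : separate g ∈ (inl : A →* A ∗ (A ∗ B)).range) : g ∈ (inl : A →* A ∗ B).range := by
  obtain ⟨a, ha⟩ := h
  refine ⟨a, ?_⟩
  have hlift : lift inl (MonoidHom.id (A ∗ B)) (separate g) = g := by
    simpa [separate, hg] using lift_wreathCoord_separateHom g 1
  rwa [← ha, lift_apply_inl] at hlift

theorem conjProd_separate_mem_range_inl {l : List (A × (A ∗ B))}
    (hsnd : ∀ p ∈ l, snd p.2 = 1) (h : conjProd l ∈ (inl : A →* A ∗ B).range) :
    conjProd (l.map (Prod.map id separate)) ∈ (inl : A →* A ∗ (A ∗ B)).range := by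
  obtain ⟨a, ha⟩ := h
  refine ⟨a, ?_⟩
  have hcoord := wreathCoord_conjProd separateHom l 1
  rw [← ha, wreathCoord_inl, separateHom_one] at hcoord
  rw [hcoord, conjProd, List.map_map]
  refine congrArg List.prod (List.map_congr_left fun p hp => ?_)
  simp [hsnd p hp, separateHom_one, separate]

/-- `RightLengthLE k g` says that `g` is a product of letters from `A` and `B` with exactly `k`
letters from `B`. Letters may be trivial, so this bounds the number of letters from `B` in the
normal form of `g`. -/
inductive RightLengthLE : ℕ → A ∗ B → Prop
  | of_inl (a : A) : RightLengthLE 0 (inl a)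
  | mul_inr_mul_inl {k : ℕ} {g : A ∗ B} (hg : RightLengthLE k g) (b : B) (a : A) :
      RightLengthLE (k + 1) (g * inr b * inl a)

namespace RightLengthLE

variable {k : ℕ} {g : A ∗ B}

theorem mem_range_inl (hg : RightLengthLE 0 g) : g ∈ (inl : A →* A ∗ B).range := by
  cases hg with
  | of_inl a => exact ⟨a, rfl⟩

theorem mul_inl (hg : RightLengthLE k g) (a : A) : RightLengthLE k (g * inl a) := by
  cases hg with
  | of_inl c => simpa only [map_mul] using of_inl (c * a)
  | mul_inr_mul_inl hg b c => simpa only [map_mul, mul_assoc] using hg.mul_inr_mul_inl b (c * a)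

theorem mul_inr (hg : RightLengthLE k g) (b : B) : RightLengthLE (k + 1) (g * inr b) := by
  simpa using hg.mul_inr_mul_inl b 1

theorem succ (hg : RightLengthLE k g) : RightLengthLE (k + 1) g := by
  simpa using hg.mul_inr 1

theorem exists_mul (hg : RightLengthLE k g) (h : A ∗ B) : ∃ m, RightLengthLE m (g * h) := by
  induction h using Monoid.Coprod.induction_on generalizing g k with
  | inl a => exact ⟨_, hg.mul_inl a⟩
  | inr b => exact ⟨_, hg.mul_inr b⟩
  | mul x y hx hy =>
    obtain ⟨m, hm⟩ := hx hg
    rw [← mul_assoc]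
    exact hy hm

theorem map_separate (hg : RightLengthLE k g) : RightLengthLE k (separate g) := by
  induction hg with
  | of_inl a => simpa only [separate_inl] using of_inl a
  | @mul_inr_mul_inl k g _ b a ih =>
    rw [separate_mul_inr_mul_inl]
    by_cases hgb : (snd (g * inr b))⁻¹ = 1
    · rw [hgb, separateHom_one]
      exact (ih.mul_inl a).succ
    · obtain ⟨w, hw⟩ := exists_separateHom_eq_inr hgb a
      rw [hw]
      exact ih.mul_inr w

/-- On the kernel of `snd`, the last letter from `A` stays in the first factor, so that the last
letter from `B` disappears. -/
theorem map_separate_of_snd_eq_one (hg : RightLengthLE (k + 1) g) (hsnd : snd g = 1) :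
    RightLengthLE k (separate g) := by
  cases hg with
  | @mul_inr_mul_inl _ g hg b a =>
    have hgb : snd (g * inr b) = 1 := by simpa using hsnd
    rw [separate_mul_inr_mul_inl, hgb, inv_one, separateHom_one]
    exact hg.map_separate.mul_inl a

end RightLengthLE

theorem exists_rightLengthLE (g : A ∗ B) : ∃ k, RightLengthLE k g := by
  simpa using (RightLengthLE.of_inl 1).exists_mul g

end

section

variable {A : Type u} [Group A] {P : Subsemigroup A}

theorem mem_range_inl_of_rightLengthLE (hconj : ∀ x ∈ P, ∀ a : A, a⁻¹ * x * a ∈ P)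
    (h1 : (1 : A) ∉ P) (k : ℕ) {B : Type max u v} [Group B] {l : List (A × (A ∗ B))}
    (hl : ∀ p ∈ l, p.1 ∈ P) (h : conjProd l ∈ (inl : A →* A ∗ B).range)
    {p : A × (A ∗ B)} (hp : p ∈ l) (hk : RightLengthLE k p.2) :
    p.2 ∈ (inl : A →* A ∗ B).range := by
  induction k generalizing B with
  | zero => exact hk.mem_range_inl
  | succ k ih =>
    have hsnd : ∀ q ∈ l, snd q.2 = 1 := fun q hq =>
      snd_eq_one_of_conjProd_mem_range_inl hconj h1 hl h hq
    have hl_separate : ∀ q ∈ l.map (Prod.map id separate), q.1 ∈ P := List.forall_mem_map.2 hl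
    exact mem_range_inl_of_separate_mem (hsnd p hp) <|
      ih hl_separate (conjProd_separate_mem_range_inl hsnd h)
        (List.mem_map_of_mem hp) (hk.map_separate_of_snd_eq_one (hsnd p hp))

theorem mem_range_inl_of_conjProd_mem_range_inl (hconj : ∀ x ∈ P, ∀ a : A, a⁻¹ * x * a ∈ P)
    (h1 : (1 : A) ∉ P) {B : Type v} [Group B] {l : List (A × (A ∗ B))}
    (hl : ∀ p ∈ l, p.1 ∈ P) (h : conjProd l ∈ (inl : A →* A ∗ B).range)
    {p : A × (A ∗ B)} (hp : p ∈ l) : p.2 ∈ (inl : A →* A ∗ B).range := by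
  have hsnd : ∀ q ∈ l, snd q.2 = 1 := fun q hq =>
    snd_eq_one_of_conjProd_mem_range_inl hconj h1 hl h hq
  have hl_separate : ∀ q ∈ l.map (Prod.map id separate), q.1 ∈ P := List.forall_mem_map.2 hl
  -- The induction on `k` needs the second factor in the larger universe, where `separate` puts it.
  obtain ⟨k, hk⟩ := exists_rightLengthLE (separate p.2)
  exact mem_range_inl_of_separate_mem (hsnd p hp) <|
    mem_range_inl_of_rightLengthLE.{u, v} hconj h1 k hl_separate
      (conjProd_separate_mem_range_inl hsnd h) (List.mem_map_of_mem hp) hk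

end

theorem freeProduct_factor_multiMalnormal_general {A B : Type*} [Group A] [Group B]
    (P : Set A)
    (hmul : ∀ x ∈ P, ∀ y ∈ P, x * y ∈ P)
    (hconj : ∀ x ∈ P, ∀ a : A, a⁻¹ * x * a ∈ P)
    (h1 : (1 : A) ∉ P)
    (l : List (A × Monoid.Coprod A B)) (hl : ∀ p ∈ l, p.1 ∈ P)
    (hout : ∃ p ∈ l, p.2 ∉ (Monoid.Coprod.inl : A →* Monoid.Coprod A B).range) :
    (l.map fun p => p.2⁻¹ * Monoid.Coprod.inl p.1 * p.2).prod ∉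
      (Monoid.Coprod.inl : A →* Monoid.Coprod A B).range := by
  obtain ⟨p, hp, hp_out⟩ := hout
  let S : Subsemigroup A := { carrier := P, mul_mem' := fun hx hy => hmul _ hx _ hy }
  exact fun h => hp_out (mem_range_inl_of_conjProd_mem_range_inl (P := S) hconj h1 hl h hp)

/-- In a free product `G = A ∗ B`, the factor `A` is multi-malnormal in `G`: for
every normal subsemigroup `P` of `A` with `1 ∉ P`, every nonempty product of
conjugates `d₁^{f₁} ⋯ dₙ^{fₙ}` with `dᵢ ∈ P` and `fᵢ ∈ G \ A` lies in `G \ A`. -/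
theorem freeProduct_factor_multiMalnormal {A B : Type*} [Group A] [Group B]
    (P : Set A)
    (hmul : ∀ x ∈ P, ∀ y ∈ P, x * y ∈ P)
    (hconj : ∀ x ∈ P, ∀ a : A, a⁻¹ * x * a ∈ P)
    (h1 : (1 : A) ∉ P)
    (l : List (A × Monoid.Coprod A B)) (hne : l ≠ [])
    (hl : ∀ p ∈ l, p.1 ∈ P ∧ p.2 ∉ (Monoid.Coprod.inl : A →* Monoid.Coprod A B).range) :
    (l.map fun p => p.2⁻¹ * Monoid.Coprod.inl p.1 * p.2).prod ∉
      (Monoid.Coprod.inl : A →* Monoid.Coprod A B).range := by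
  obtain ⟨p, hp⟩ := List.exists_mem_of_ne_nil l hne
  exact freeProduct_factor_multiMalnormal_general P hmul hconj h1 l (fun q hq => (hl q hq).1)
    ⟨p, hp, (hl p hp).2⟩
end
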